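/- Let n ≥ 2, let X be the set of the two degree-one vertices (endpoints) of the path P_n, let H be a connected simple graph, and let J := (P_n, X) ∨ H be the partial join obtained from the disjoint union of P_n and H by joining each endpoint of P_n to every vertex of H. Then for every s ∈ ℕ₀ with 2s ≤ n + |H|, there exists a matrix A ∈ S(J) whose spectrum consists of exactly s eigenvalues of multiplicity 2 and n + |H| − 2s eigenvalues of multiplicity 1 (i.e., A realises the unordered multiplicity list {2^(s), 1^(n+|H|−2s)}). -/

import Mathlib

open Matrix Filter

/-- `A ∈ S(G)`: real symmetric matrix whose off-diagonal zero pattern is given by `G`. -/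
def inS {V : Type*} (G : SimpleGraph V) (A : Matrix V V ℝ) : Prop :=
  A.IsSymm ∧ ∀ i j : V, i ≠ j → (A i j ≠ 0 ↔ G.Adj i j)

/-- The spectrum of a matrix, as the multiset of roots of its characteristic polynomial. -/
noncomputable def specMultiset {V : Type*} [Fintype V] [DecidableEq V]
    (A : Matrix V V ℝ) : Multiset ℝ :=
  A.charpoly.roots

/-- The number of distinct eigenvalues of a matrix. -/
noncomputable def qMat {V : Type*} [Fintype V] [DecidableEq V] (A : Matrix V V ℝ) : ℕ :=
  (specMultiset A).toFinset.card

/-- `q(G)`: the minimum number of distinct eigenvalues over matrices in `S(G)`. -/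
noncomputable def qGraph {V : Type*} [Fintype V] [DecidableEq V] (G : SimpleGraph V) : ℕ :=
  sInf {q | ∃ A : Matrix V V ℝ, inS G A ∧ qMat A = q}

/-- The strong spectral property. -/
def HasSSP {V : Type*} [Fintype V] [DecidableEq V] (A : Matrix V V ℝ) : Prop :=
  ∀ X : Matrix V V ℝ, X.IsSymm → A * X = X * A →
    Matrix.hadamard A X = 0 → Matrix.hadamard (1 : Matrix V V ℝ) X = 0 → X = 0

/-- Generic realisability of a multiset of eigenvalues for a graph. -/
def GenericallyRealisable {V : Type*} [Fintype V] [DecidableEq V]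
    (G : SimpleGraph V) (σ : Multiset ℝ) : Prop :=
  ∀ Y : Finset (V → ℝ), (∀ y ∈ Y, y ≠ 0) →
    ∃ (d : V → ℝ) (U : Matrix V V ℝ),
      Multiset.map d Finset.univ.val = σ ∧ Uᵀ * U = 1 ∧
      inS G (U * Matrix.diagonal d * Uᵀ) ∧
      ∀ y ∈ Y, ∀ i, U.mulVec y i ≠ 0

/-- The partial join `(G₁, X) ∨ G₂`: the disjoint union of `G₁` and `G₂` together with all
edges joining vertices of `X ⊆ V(G₁)` to vertices of `G₂`. -/
def partialJoin {α β : Type*} (G₁ : SimpleGraph α) (X : Set α) (G₂ : SimpleGraph β) :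
    SimpleGraph (α ⊕ β) where
  Adj x y :=
    (∃ a b, G₁.Adj a b ∧ x = Sum.inl a ∧ y = Sum.inl b) ∨
    (∃ a b, G₂.Adj a b ∧ x = Sum.inr a ∧ y = Sum.inr b) ∨
    (∃ a ∈ X, ∃ b, x = Sum.inl a ∧ y = Sum.inr b) ∨
    (∃ a ∈ X, ∃ b, x = Sum.inr b ∧ y = Sum.inl a)
  symm := by
    constructor
    rintro x y (⟨a, b, hab, rfl, rfl⟩ | ⟨a, b, hab, rfl, rfl⟩ | ⟨a, ha, b, rfl, rfl⟩ |
      ⟨a, ha, b, rfl, rfl⟩)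
    · exact Or.inl ⟨b, a, hab.symm, rfl, rfl⟩
    · exact Or.inr (Or.inl ⟨b, a, hab.symm, rfl, rfl⟩)
    · exact Or.inr (Or.inr (Or.inr ⟨a, ha, b, rfl, rfl⟩))
    · exact Or.inr (Or.inr (Or.inl ⟨a, ha, b, rfl, rfl⟩))
  loopless := by
    constructor
    rintro x (⟨a, b, hab, rfl, h⟩ | ⟨a, b, hab, rfl, h⟩ | ⟨a, ha, b, rfl, h⟩ | ⟨a, ha, b, rfl, h⟩)
    · cases h; exact hab.ne rfl
    · cases h; exact hab.ne rfl
    · exact (Sum.inl_ne_inr h).elim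
    · exact (Sum.inr_ne_inl h).elim

/-- The join `G₁ ∨ G₂` of two graphs. -/
def graphJoin {α β : Type*} (G₁ : SimpleGraph α) (G₂ : SimpleGraph β) : SimpleGraph (α ⊕ β) :=
  partialJoin G₁ Set.univ G₂

/-- The disjoint union of a family of graphs. -/
def sigmaGraph {ι : Type*} {α : ι → Type*} (G : ∀ i, SimpleGraph (α i)) :
    SimpleGraph (Σ i, α i) where
  Adj x y := ∃ (i : ι) (a b : α i), (G i).Adj a b ∧ x = ⟨i, a⟩ ∧ y = ⟨i, b⟩
  symm := by
    constructor
    rintro x y ⟨i, a, b, hab, rfl, rfl⟩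
    exact ⟨i, b, a, hab.symm, rfl, rfl⟩
  loopless := by
    constructor
    rintro x ⟨i, a, b, hab, rfl, h⟩
    obtain rfl : a = b := by simpa using h
    exact hab.ne rfl

/-!
A nondecreasing list `x` with ties `xₖ = xₖ₊₁` only at indices `k` of one parity is the spectrum of
a matrix in `S(C_N)`. Let `νₖ` be the midpoint of `xₖ` and `xₖ₊₁`, and `wₖ = 1 / ∏ⱼ (νₖ - νⱼ)` over
`j ≠ k`. Then `x` is the spectrum of `diag ν` bordered by a vector `c` with
`cₖ² = -wₖ ∏ⱼ (νₖ - xⱼ)`, which vanishes exactly at the ties. The signs of `w` alternate, so they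
agree at the ties, and one can split `c = a + b` with `aₖ bₖ = t wₖ` for a small `t` of the opposite
sign. As `∑ₖ wₖ νₖʲ = 0` for small `j`, the vector `b` is orthogonal to all but the last of the
Krylov vectors `νʲ a`. Hence the Lanczos tridiagonalisation of `diag ν` started at `a` turns the
diagonal block into a matrix of a path and moves `a` and `b` to the two ends of the path, which
closes up to a cycle through the border vertex.

For `N = n + |H|`, cut this cycle into `P_n` and a second path. A matrix of a path has simple
eigenvalues, and its eigenvectors are nonzero at both ends, so diagonalising the second block joins
each end of `P_n` to all `|H|` new coordinates. Finally, the implicit function theorem gives an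
orthogonal `Q` conjugating this diagonal block into `S(H)`, so close to the identity that the
joining entries stay nonzero.
-/

section ZeroPattern

variable {V W α β : Type*}

lemma inS_of_lt [LinearOrder V] {G : SimpleGraph V} {A : Matrix V V ℝ} (hA : A.IsSymm)
    (h : ∀ i j, i < j → (A i j ≠ 0 ↔ G.Adj i j)) : inS G A := by
  refine ⟨hA, fun i j hij => ?_⟩
  rcases hij.lt_or_gt with hlt | hgt
  · exact h i j hlt
  · rw [← hA.apply, G.adj_comm]
    exact h j i hgt

lemma inS_submatrix {G : SimpleGraph W} {A : Matrix W W ℝ} (hA : inS G A) {f : V → W}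
    (hf : Function.Injective f) : inS (G.comap f) (A.submatrix f f) :=
  ⟨hA.1.submatrix f, fun _ _ hij => hA.2 _ _ (hf.ne hij)⟩

variable {G : SimpleGraph α} {X : Set α} {H : SimpleGraph β}

@[simp]
lemma partialJoin_adj_inl_inl {a a' : α} :
    (partialJoin G X H).Adj (Sum.inl a) (Sum.inl a') ↔ G.Adj a a' := by
  simp [partialJoin]

@[simp]
lemma partialJoin_adj_inr_inr {b b' : β} :
    (partialJoin G X H).Adj (Sum.inr b) (Sum.inr b') ↔ H.Adj b b' := by
  simp [partialJoin]

@[simp]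
lemma partialJoin_adj_inl_inr {a : α} {b : β} :
    (partialJoin G X H).Adj (Sum.inl a) (Sum.inr b) ↔ a ∈ X := by
  simp [partialJoin]

lemma inS_partialJoin_fromBlocks {A : Matrix α α ℝ} {B : Matrix α β ℝ} {D : Matrix β β ℝ}
    (hA : inS G A) (hB : ∀ i j, B i j ≠ 0 ↔ i ∈ X) (hD : inS H D) :
    inS (partialJoin G X H) (fromBlocks A B Bᵀ D) := by
  refine ⟨IsSymm.fromBlocks hA.1 rfl hD.1, ?_⟩
  rintro (i | i) (j | j) hij
  · simpa using hA.2 i j (by simpa using hij)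
  · simpa using hB i j
  · simpa [(partialJoin G X H).adj_comm] using hB j i
  · simpa using hD.2 i j (by simpa using hij)

end ZeroPattern

section Cycle

open SimpleGraph

lemma cycleGraph_adj_of_lt {N : ℕ} {u v : Fin N} (h : u < v) :
    (cycleGraph N).Adj u v ↔ (u : ℕ) + 1 = v ∨ ((u : ℕ) = 0 ∧ (v : ℕ) + 1 = N) := by
  rw [cycleGraph_adj', Fin.coe_sub_iff_lt.mpr h, Fin.coe_sub_iff_le.mpr h.le]
  omega

variable {n h : ℕ}

lemma cycleGraph_comap_castAdd (hh : 0 < h) :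
    (cycleGraph (n + h)).comap (Fin.castAdd h) = pathGraph n := by
  ext i j
  wlog hij : i < j generalizing i j
  · rcases (not_lt.mp hij).eq_or_lt with rfl | hlt
    · simp
    · rw [adj_comm, this j i hlt, adj_comm]
  rw [comap_adj, cycleGraph_adj_of_lt (Fin.strictMono_castAdd h hij), pathGraph_adj]
  grind

lemma cycleGraph_comap_natAdd (hn : 0 < n) :
    (cycleGraph (n + h)).comap (Fin.natAdd n) = pathGraph h := by
  ext i j
  wlog hij : i < j generalizing i j
  · rcases (not_lt.mp hij).eq_or_lt with rfl | hlt
    · simp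
    · rw [adj_comm, this j i hlt, adj_comm]
  rw [comap_adj, cycleGraph_adj_of_lt (Fin.strictMono_natAdd n hij), pathGraph_adj]
  grind

lemma cycleGraph_adj_castAdd_natAdd {i : Fin n} {j : Fin h} :
    (cycleGraph (n + h)).Adj (Fin.castAdd h i) (Fin.natAdd n j) ↔
      ((i : ℕ) = 0 ∧ (j : ℕ) + 1 = h) ∨ ((i : ℕ) + 1 = n ∧ (j : ℕ) = 0) := by
  rw [cycleGraph_adj_of_lt (Fin.lt_def.mpr (by grind))]
  grind

lemma cycleGraph_comap_finSumFinEquiv {m : ℕ} (H : SimpleGraph (Fin 1)) :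
    (cycleGraph (m + 1)).comap finSumFinEquiv =
      partialJoin (pathGraph m) {i | (i : ℕ) = 0 ∨ (i : ℕ) + 1 = m} H := by
  have hpath {i j : Fin m} : (cycleGraph (m + 1)).Adj (Fin.castAdd 1 i) (Fin.castAdd 1 j) ↔
      (pathGraph m).Adj i j := by
    rw [← cycleGraph_comap_castAdd one_pos, comap_adj]
  ext (i | i) (j | j)
  · simp [hpath]
  · simp [cycleGraph_adj_castAdd_natAdd]
  · simp [adj_comm, cycleGraph_adj_castAdd_natAdd]
  · simp [Subsingleton.elim i j]

end Cycle

section Conjugation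

variable {R m n : Type*} [CommRing R] [Fintype m] [DecidableEq m] [Fintype n] [DecidableEq n]

lemma charpoly_mul_mul_transpose {Q : Matrix m m R} (hQ : Qᵀ * Q = 1) (A : Matrix m m R) :
    (Q * A * Qᵀ).charpoly = A.charpoly := by
  rw [charpoly_mul_comm, ← Matrix.mul_assoc, hQ, Matrix.one_mul]

lemma charpoly_fromBlocks_mul_mul_transpose {P : Matrix m m R} {Q : Matrix n n R}
    (hP : Pᵀ * P = 1) (hQ : Qᵀ * Q = 1) (A : Matrix m m R) (B : Matrix m n R)
    (C : Matrix n m R) (D : Matrix n n R) :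
    (fromBlocks (P * A * Pᵀ) (P * B * Qᵀ) (Q * C * Pᵀ) (Q * D * Qᵀ)).charpoly =
      (fromBlocks A B C D).charpoly := by
  have hPQ : (fromBlocks P 0 0 Q)ᵀ * fromBlocks P 0 0 Q = 1 := by
    simp [fromBlocks_transpose, fromBlocks_multiply, hP, hQ]
  rw [← charpoly_mul_mul_transpose hPQ (fromBlocks A B C D)]
  simp [fromBlocks_transpose, fromBlocks_multiply]

end Conjugation

section Hessenberg

/-- Upper Hessenberg matrices with no zero on the subdiagonal. The symmetric ones are the
irreducible tridiagonal matrices, which form `S(P_n)`. -/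
def IsUnreducedHessenberg {R : Type*} [Zero R] {n : ℕ} (A : Matrix (Fin n) (Fin n) R) : Prop :=
  (∀ i j : Fin n, (j : ℕ) + 1 < i → A i j = 0) ∧ ∀ i j : Fin n, (j : ℕ) + 1 = i → A i j ≠ 0

namespace IsUnreducedHessenberg

lemma rev_transpose {R : Type*} [Zero R] {n : ℕ} {A : Matrix (Fin n) (Fin n) R}
    (hA : IsUnreducedHessenberg A) :
    IsUnreducedHessenberg (Aᵀ.submatrix Fin.revPerm Fin.revPerm) :=
  ⟨fun i j hij => hA.1 _ _ (by simp only [Fin.revPerm_apply]; grind),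
    fun i j hij => hA.2 _ _ (by simp only [Fin.revPerm_apply]; grind)⟩

variable {R : Type*} [CommRing R] [IsDomain R] {m : ℕ} {A : Matrix (Fin (m + 1)) (Fin (m + 1)) R}

lemma mul_isUpperTriangular {n : ℕ} {S U : Matrix (Fin n) (Fin n) R}
    (hS : IsUnreducedHessenberg S) (hU : U.IsUpperTriangular) (hdet : U.det ≠ 0) :
    IsUnreducedHessenberg (S * U) := by
  have hentry {i j : Fin n} (hij : (j : ℕ) + 1 ≤ i) : (S * U) i j = S i j * U j j := by
    rw [mul_apply, Fintype.sum_eq_single j]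
    intro l hl
    rcases hl.lt_or_gt with hlt | hgt
    · rw [hS.1 i l (by grind), zero_mul]
    · rw [hU hgt, mul_zero]
  rw [det_of_isUpperTriangular hU, Finset.prod_ne_zero_iff] at hdet
  refine ⟨fun i j hij => ?_, fun i j hij => ?_⟩
  · rw [hentry hij.le, hS.1 i j hij, zero_mul]
  · rw [hentry hij.le]
    exact mul_ne_zero (hS.2 i j hij) (hdet j (Finset.mem_univ j))

lemma eigenvector_eq_zero (hA : IsUnreducedHessenberg A) {μ : R} {x : Fin (m + 1) → R}
    (hx : A *ᵥ x = μ • x) (hlast : x (Fin.last m) = 0) : x = 0 := by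
  ext j
  induction j using WellFoundedGT.induction with
  | ind j ih =>
    rcases eq_or_ne j (Fin.last m) with rfl | hj
    · exact hlast
    have hlt : (j : ℕ) + 1 < m + 1 := by grind
    have hrow : A ⟨j + 1, hlt⟩ j * x j = 0 := calc
      A ⟨j + 1, hlt⟩ j * x j = (A *ᵥ x) ⟨j + 1, hlt⟩ := by
        rw [mulVec, dotProduct, Fintype.sum_eq_single j]
        intro l hl
        rcases hl.lt_or_gt with hlt | hgt
        · rw [hA.1 _ _ (by simpa using hlt), zero_mul]
        · rw [ih l hgt, Pi.zero_apply, mul_zero]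
      _ = μ * x ⟨j + 1, hlt⟩ := congrFun hx _
      _ = 0 := by rw [ih _ (Fin.lt_def.mpr j.val.lt_succ_self), Pi.zero_apply, mul_zero]
    exact (mul_eq_zero.mp hrow).resolve_left (hA.2 _ _ rfl)

variable {V : Matrix (Fin (m + 1)) (Fin (m + 1)) R} {μ : Fin (m + 1) → R}

lemma eigenbasis_last_ne_zero (hA : IsUnreducedHessenberg A) (hV : IsUnit V)
    (h : A * V = V * diagonal μ) (k : Fin (m + 1)) : V (Fin.last m) k ≠ 0 := by
  intro hk
  have hcol : A *ᵥ (V *ᵥ Pi.single k 1) = μ k • (V *ᵥ Pi.single k 1) := by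
    rw [mulVec_mulVec, h, ← mulVec_mulVec, diagonal_mulVec_single, mul_one, ← mulVec_smul,
      ← Pi.single_smul, smul_eq_mul, mul_one]
  have hzero := hA.eigenvector_eq_zero hcol (by simpa using hk)
  have := mulVec_injective_of_isUnit hV (hzero.trans (mulVec_zero V).symm)
  simpa using congrFun this k

lemma eigenvalue_injective (hA : IsUnreducedHessenberg A) (hV : IsUnit V)
    (h : A * V = V * diagonal μ) : Function.Injective μ := by
  intro k l hkl
  by_contra hne
  set y : Fin (m + 1) → R :=
    Pi.single k (V (Fin.last m) l) - Pi.single l (V (Fin.last m) k) with hy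
  have heig : A *ᵥ (V *ᵥ y) = μ k • (V *ᵥ y) := by
    rw [mulVec_mulVec, h, ← mulVec_mulVec, ← mulVec_smul]
    congr 1
    rw [hy, mulVec_sub, diagonal_mulVec_single, diagonal_mulVec_single, smul_sub,
      ← Pi.single_smul, ← Pi.single_smul, hkl, smul_eq_mul, smul_eq_mul]
  have hzero := hA.eigenvector_eq_zero heig
    (by simp [hy, mulVec_sub, mulVec_single, mul_comm])
  have hy0 : y = 0 := mulVec_injective_of_isUnit hV (hzero.trans (mulVec_zero V).symm)
  refine hA.eigenbasis_last_ne_zero hV h l ?_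
  simpa [hy, Pi.single_apply, hne] using congrFun hy0 k

end IsUnreducedHessenberg

lemma inS_pathGraph_iff {n : ℕ} {A : Matrix (Fin n) (Fin n) ℝ} :
    inS (SimpleGraph.pathGraph n) A ↔ A.IsSymm ∧ IsUnreducedHessenberg A := by
  constructor
  · rintro ⟨hsymm, h⟩
    refine ⟨hsymm, fun i j hij => ?_, fun i j hij => ?_⟩
    · have := h i j (by grind)
      rw [SimpleGraph.pathGraph_adj] at this
      grind
    · exact (h i j (by grind)).mpr (SimpleGraph.pathGraph_adj.mpr (Or.inr hij))
  · rintro ⟨hsymm, hzero, hne⟩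
    refine inS_of_lt hsymm fun i j hij => ?_
    rw [SimpleGraph.pathGraph_adj, ← hsymm.apply]
    have h1 := hzero j i
    have h2 := hne j i
    grind

end Hessenberg

section Orthogonal

lemma exists_isUpperTriangular_orthogonal_mul {ι : Type*} [LinearOrder ι] [Fintype ι]
    [LocallyFiniteOrderBot ι] [WellFoundedLT ι] (K : Matrix ι ι ℝ) :
    ∃ W : Matrix ι ι ℝ, Wᵀ * W = 1 ∧ (W * K).IsUpperTriangular := by
  let f : ι → EuclideanSpace ℝ ι := fun j => WithLp.toLp 2 (K.col j)
  let e := InnerProductSpace.gramSchmidtOrthonormalBasis finrank_euclideanSpace f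
  let b := EuclideanSpace.basisFun ι ℝ
  have hK : b.toBasis.toMatrix f = K := by
    ext i j
    simp [b, f, Module.Basis.toMatrix_apply]
  refine ⟨e.toBasis.toMatrix b, ?_, ?_⟩
  · exact (mem_orthogonalGroup_iff' ι ℝ).mp (e.toMatrix_orthonormalBasis_mem_orthogonal b)
  · rw [← hK, ← OrthonormalBasis.coe_toBasis b, Module.Basis.toMatrix_mul_toMatrix]
    exact InnerProductSpace.gramSchmidtOrthonormalBasis_inv_isUpperTriangular _ f

lemma exists_orthogonal_mul_diagonal_mul_transpose {n : Type*} [Fintype n] [DecidableEq n]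
    {A : Matrix n n ℝ} (hA : A.IsSymm) :
    ∃ (V : Matrix n n ℝ) (d : n → ℝ), Vᵀ * V = 1 ∧ A = V * diagonal d * Vᵀ := by
  have hA' : A.IsHermitian := hA
  exact ⟨hA'.eigenvectorUnitary, hA'.eigenvalues,
    Unitary.coe_star_mul_self hA'.eigenvectorUnitary, hA'.spectral_theorem⟩

end Orthogonal

section Hessenberg

variable {m : ℕ}

lemma exists_eigenbasis_of_inS_pathGraph {A : Matrix (Fin (m + 1)) (Fin (m + 1)) ℝ}
    (hA : inS (SimpleGraph.pathGraph (m + 1)) A) :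
    ∃ (V : Matrix (Fin (m + 1)) (Fin (m + 1)) ℝ) (d : Fin (m + 1) → ℝ),
      Vᵀ * V = 1 ∧ A = V * diagonal d * Vᵀ ∧ Function.Injective d ∧
      ∀ k, V 0 k ≠ 0 ∧ V (Fin.last m) k ≠ 0 := by
  obtain ⟨hsymm, hHess⟩ := inS_pathGraph_iff.mp hA
  obtain ⟨V, d, hV, hVA⟩ := exists_orthogonal_mul_diagonal_mul_transpose hsymm
  have hunit : IsUnit V := IsUnit.of_mul_eq_one_right _ hV
  have heig : A * V = V * diagonal d := by
    rw [hVA, Matrix.mul_assoc _ Vᵀ, hV, Matrix.mul_one]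
  have hrev : IsUnreducedHessenberg (A.submatrix Fin.revPerm Fin.revPerm) := by
    simpa only [hsymm.eq] using hHess.rev_transpose
  have heigrev : A.submatrix Fin.revPerm Fin.revPerm * V.submatrix Fin.revPerm id =
      V.submatrix Fin.revPerm id * diagonal d := by
    rw [submatrix_mul_equiv, heig, submatrix_mul _ _ _ _ _ Function.bijective_id, submatrix_id_id]
  have hunitrev : IsUnit (V.submatrix Fin.revPerm id) :=
    (isUnit_submatrix_equiv Fin.revPerm (Equiv.refl _)).mpr hunit
  exact ⟨V, d, hV, hVA, hHess.eigenvalue_injective hunit heig, fun k =>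
    ⟨by simpa using hrev.eigenbasis_last_ne_zero hunitrev heigrev k,
      hHess.eigenbasis_last_ne_zero hunit heig k⟩⟩

end Hessenberg

section Lanczos

/-- The Krylov matrix of `diagonal ν` and the start vector `a`: its columns are the vectors
`(diagonal ν) ^ j *ᵥ a`. -/
def krylovMatrix {R : Type*} [CommRing R] {n : ℕ} (ν a : Fin n → R) : Matrix (Fin n) (Fin n) R :=
  diagonal a * vandermonde ν

lemma krylovMatrix_apply {R : Type*} [CommRing R] {n : ℕ} (ν a : Fin n → R) (k j : Fin n) :
    krylovMatrix ν a k j = a k * ν k ^ (j : ℕ) := by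
  simp [krylovMatrix, vandermonde_apply]

lemma det_krylovMatrix_ne_zero {R : Type*} [CommRing R] [IsDomain R] {n : ℕ} {ν a : Fin n → R}
    (hν : Function.Injective ν) (ha : ∀ k, a k ≠ 0) : (krylovMatrix ν a).det ≠ 0 := by
  rw [krylovMatrix, det_mul, det_diagonal]
  exact mul_ne_zero (Finset.prod_ne_zero_iff.mpr fun k _ => ha k)
    (det_vandermonde_ne_zero_iff.mpr hν)

lemma isUpperTriangular_diag_ne_zero {R ι : Type*} [CommRing R] [Nontrivial R] [LinearOrder ι]
    [Fintype ι] {U : Matrix ι ι R} (hU : U.IsUpperTriangular) (hdet : IsUnit U.det) (i : ι) :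
    U i i ≠ 0 := by
  rw [det_of_isUpperTriangular hU, IsUnit.prod_univ_iff] at hdet
  exact (hdet i).ne_zero

lemma isUpperTriangular_nonsing_inv {R ι : Type*} [CommRing R] [LinearOrder ι] [Fintype ι]
    {U : Matrix ι ι R} (hU : U.IsUpperTriangular) (hdet : IsUnit U.det) :
    U⁻¹.IsUpperTriangular := by
  have := U.invertibleOfIsUnitDet hdet
  exact blockTriangular_inv_of_blockTriangular hU

section Tridiagonalization

variable {K : Type*} [Field K] {m : ℕ} {ν a : Fin (m + 1) → K}
  {W : Matrix (Fin (m + 1)) (Fin (m + 1)) K}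

lemma isUnit_det_mul_krylovMatrix (hν : Function.Injective ν) (ha : ∀ k, a k ≠ 0)
    (hW : Wᵀ * W = 1) : IsUnit (W * krylovMatrix ν a).det := by
  rw [det_mul]
  exact ((isUnit_iff_isUnit_det W).mp (IsUnit.of_mul_eq_one_right _ hW)).mul
    (det_krylovMatrix_ne_zero hν ha).isUnit

lemma isUnreducedHessenberg_mul_diagonal_mul_transpose (hν : Function.Injective ν)
    (ha : ∀ k, a k ≠ 0) (hW : Wᵀ * W = 1) (hU : (W * krylovMatrix ν a).IsUpperTriangular) :
    IsUnreducedHessenberg (W * diagonal ν * Wᵀ) := by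
  set U := W * krylovMatrix ν a with hUdef
  have hdet : IsUnit U.det := isUnit_det_mul_krylovMatrix hν ha hW
  have hshift (i j : Fin (m + 1)) (hj : (j : ℕ) + 1 < m + 1) :
      (W * (diagonal ν * krylovMatrix ν a)) i j = U i ⟨j + 1, hj⟩ := by
    rw [hUdef, mul_apply, mul_apply]
    refine Finset.sum_congr rfl fun k _ => ?_
    rw [diagonal_mul, krylovMatrix_apply, krylovMatrix_apply, pow_succ]
    ring
  have hHess : IsUnreducedHessenberg (W * (diagonal ν * krylovMatrix ν a)) := by
    refine ⟨fun i j hij => ?_, fun i j hij => ?_⟩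
    · rw [hshift i j (by grind)]
      exact hU (Fin.lt_def.mpr hij)
    · rw [hshift i j (by grind), show (⟨j + 1, by grind⟩ : Fin (m + 1)) = i from Fin.ext hij]
      exact isUpperTriangular_diag_ne_zero hU hdet i
  have hT : W * diagonal ν * Wᵀ = W * (diagonal ν * krylovMatrix ν a) * U⁻¹ := calc
    W * diagonal ν * Wᵀ = W * diagonal ν * Wᵀ * (U * U⁻¹) := by
      rw [mul_nonsing_inv U hdet, Matrix.mul_one]
    _ = W * diagonal ν * (Wᵀ * W) * krylovMatrix ν a * U⁻¹ := by
      simp only [hUdef, Matrix.mul_assoc]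
    _ = W * (diagonal ν * krylovMatrix ν a) * U⁻¹ := by
      rw [hW, Matrix.mul_one, Matrix.mul_assoc W]
  rw [hT]
  exact hHess.mul_isUpperTriangular (isUpperTriangular_nonsing_inv hU hdet)
    (isUnit_nonsing_inv_det _ hdet).ne_zero

lemma mulVec_start_ne_zero_iff (hν : Function.Injective ν)
    (ha : ∀ k, a k ≠ 0) (hW : Wᵀ * W = 1) (hU : (W * krylovMatrix ν a).IsUpperTriangular)
    (i : Fin (m + 1)) : (W *ᵥ a) i ≠ 0 ↔ i = 0 := by
  have hcol : (W *ᵥ a) i = (W * krylovMatrix ν a) i 0 := by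
    simp [mul_apply, mulVec, dotProduct, krylovMatrix_apply]
  rw [hcol]
  constructor
  · contrapose!
    exact fun hi => hU (Fin.pos_iff_ne_zero.mpr hi)
  · rintro rfl
    exact isUpperTriangular_diag_ne_zero hU (isUnit_det_mul_krylovMatrix hν ha hW) 0

lemma mulVec_orthogonal_krylov_ne_zero_iff (hν : Function.Injective ν)
    (ha : ∀ k, a k ≠ 0) (hW : Wᵀ * W = 1) (hU : (W * krylovMatrix ν a).IsUpperTriangular)
    {b : Fin (m + 1) → K} (hb : b ≠ 0)
    (horth : ∀ j < m, ∑ k, b k * (a k * ν k ^ j) = 0) (i : Fin (m + 1)) :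
    (W *ᵥ b) i ≠ 0 ↔ i = Fin.last m := by
  set U := W * krylovMatrix ν a with hUdef
  have hdet : IsUnit U.det := isUnit_det_mul_krylovMatrix hν ha hW
  set c : K := ((krylovMatrix ν a)ᵀ *ᵥ b) (Fin.last m)
  have hc : (krylovMatrix ν a)ᵀ *ᵥ b = Pi.single (Fin.last m) c := by
    ext j
    rcases eq_or_ne j (Fin.last m) with rfl | hj
    · simp [c]
    · rw [Pi.single_eq_of_ne hj, ← horth j (by grind)]
      simp [mulVec, dotProduct, krylovMatrix_apply, mul_comm]
  have hUb : (W *ᵥ b) ᵥ* U = Pi.single (Fin.last m) c := by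
    rw [← hc, mulVec_transpose, hUdef, ← vecMul_vecMul, ← mulVec_transpose W, mulVec_mulVec, hW,
      one_mulVec]
  have hWb : W *ᵥ b = c • U⁻¹ (Fin.last m) := calc
    W *ᵥ b = ((W *ᵥ b) ᵥ* U) ᵥ* U⁻¹ := by
      rw [vecMul_vecMul, mul_nonsing_inv U hdet, vecMul_one]
    _ = c • U⁻¹ (Fin.last m) := by rw [hUb, single_vecMul]; rfl
  have hc0 : c ≠ 0 := by
    rintro hc0
    refine hb ?_
    rw [← one_mulVec b, ← hW, ← mulVec_mulVec, hWb, hc0, zero_smul, mulVec_zero]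
  have hinv := isUpperTriangular_nonsing_inv hU hdet
  rw [hWb, Pi.smul_apply, smul_ne_zero_iff, and_iff_right hc0]
  constructor
  · contrapose!
    exact fun hi => hinv (Fin.lt_last_iff_ne_last.mpr hi)
  · rintro rfl
    exact isUpperTriangular_diag_ne_zero hinv (isUnit_nonsing_inv_det _ hdet) _

end Tridiagonalization

end Lanczos

section BorderedDiagonal

open Polynomial

variable {K ι : Type*} [Field K] [Fintype ι] [DecidableEq ι] {ν c : ι → K}

/-- The diagonal matrix `diagonal ν` bordered by the vector `c`, with corner entry `d`. -/
def borderedDiagonal (ν c : ι → K) (d : K) : Matrix (ι ⊕ Fin 1) (ι ⊕ Fin 1) K :=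
  fromBlocks (diagonal ν) (replicateCol (Fin 1) c) (replicateCol (Fin 1) c)ᵀ (diagonal fun _ => d)

lemma eval_charpoly_borderedDiagonal {d z : K} (hz : ∀ k, z ≠ ν k) :
    (borderedDiagonal ν c d).charpoly.eval z =
      (Lagrange.nodal Finset.univ ν).eval z * (z - d - ∑ k, c k ^ 2 * (z - ν k)⁻¹) := by
  have hblocks : scalar (ι ⊕ Fin 1) z - borderedDiagonal ν c d =
      fromBlocks (diagonal fun k => z - ν k) (-replicateCol (Fin 1) c)
        (-(replicateCol (Fin 1) c)ᵀ) (diagonal fun _ => z - d) := by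
    have hscalar : scalar (ι ⊕ Fin 1) z =
        fromBlocks (diagonal fun _ => z) 0 0 (diagonal fun _ => z) := by
      rw [fromBlocks_diagonal, scalar_apply, Sum.elim_lam_const_lam_const]
    rw [hscalar, borderedDiagonal, sub_eq_add_neg, fromBlocks_neg, fromBlocks_add]
    simp [← sub_eq_add_neg]
  have hinv : (diagonal fun k => z - ν k) * diagonal (fun k => (z - ν k)⁻¹) = 1 := by
    simp [sub_ne_zero.mpr (hz _)]
  have := invertibleOfRightInverse _ _ hinv
  rw [eval_charpoly, hblocks, det_fromBlocks₁₁, invOf_eq_right_inv hinv, det_diagonal,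
    Lagrange.eval_nodal, det_fin_one, Matrix.sub_apply, Matrix.mul_apply]
  congr 1
  simp [mul_diagonal, sq, mul_right_comm]

lemma exists_eval_eq_nodal_mul_of_monic (hν : Function.Injective ν) {p : K[X]} (hp : p.Monic)
    (hdeg : p.natDegree = Fintype.card ι + 1) :
    ∃ d, ∀ z, (∀ k, z ≠ ν k) → p.eval z = (Lagrange.nodal Finset.univ ν).eval z *
      (z - d + ∑ k, Lagrange.nodalWeight Finset.univ ν k * (z - ν k)⁻¹ * p.eval (ν k)) := by
  set g := Lagrange.nodal Finset.univ ν with hg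
  have hgm : g.Monic := Lagrange.nodal_monic
  have hgdeg : g.natDegree = Fintype.card ι := Lagrange.natDegree_nodal
  have hle : g.degree ≤ p.degree := by
    rw [degree_eq_natDegree hgm.ne_zero, degree_eq_natDegree hp.ne_zero, hgdeg, hdeg]
    exact_mod_cast Nat.le_succ _
  have hquot : (p /ₘ g).Monic := (leadingCoeff_divByMonic_of_monic hgm hle).trans hp
  have hquot1 : (p /ₘ g).natDegree = 1 := by
    rw [natDegree_divByMonic p hgm, hdeg, hgdeg, Nat.add_sub_cancel_left]
  have hdiv : p %ₘ g + g * (p /ₘ g) = p := modByMonic_add_div p g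
  have hrem : p %ₘ g = Lagrange.interpolate Finset.univ ν fun k => p.eval (ν k) := by
    refine Lagrange.eq_interpolate_of_eval_eq _ hν.injOn ?_ fun k hk => ?_
    · simpa [hg] using degree_modByMonic_lt p hgm
    · conv_rhs => rw [← hdiv, eval_add, eval_mul, hg, Lagrange.eval_nodal_at_node hk, zero_mul,
        add_zero]
  refine ⟨-(p /ₘ g).coeff 0, fun z hz => ?_⟩
  conv_lhs => rw [← hdiv, hrem, hquot.eq_X_add_C hquot1, eval_add, eval_mul,
    Lagrange.eval_interpolate_not_at_node _ fun k _ => hz k]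
  simp only [eval_add, eval_X, eval_C]
  ring

theorem exists_charpoly_borderedDiagonal_eq [Infinite K] (hν : Function.Injective ν) {p : K[X]}
    (hp : p.Monic) (hdeg : p.natDegree = Fintype.card ι + 1)
    (hc : ∀ k, c k ^ 2 = -(Lagrange.nodalWeight Finset.univ ν k * p.eval (ν k))) :
    ∃ d, (borderedDiagonal ν c d).charpoly = p := by
  obtain ⟨d, hd⟩ := exists_eval_eq_nodal_mul_of_monic hν hp hdeg
  refine ⟨d, eq_of_infinite_eval_eq _ _ ((Set.finite_range ν).infinite_compl.mono fun z hz => ?_)⟩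
  have hz' (k : ι) : z ≠ ν k := fun h => hz ⟨k, h.symm⟩
  rw [Set.mem_ofPred_eq, eval_charpoly_borderedDiagonal hz', hd z hz', sub_eq_add_neg (z - d),
    ← Finset.sum_neg_distrib]
  congr! 3 with k
  rw [hc]
  ring

lemma sum_nodalWeight_mul_pow_eq_zero (hν : Function.Injective ν) {j : ℕ}
    (hj : j + 1 < Fintype.card ι) :
    ∑ k, Lagrange.nodalWeight Finset.univ ν k * ν k ^ j = 0 := by
  have hcoeff := Lagrange.coeff_eq_sum (s := Finset.univ) (P := X ^ j) hν.injOn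
    (by rw [degree_X_pow, Finset.card_univ]; exact_mod_cast j.lt_succ_self.trans hj)
  rw [coeff_X_pow, if_neg (by rw [Finset.card_univ]; omega)] at hcoeff
  simpa [Lagrange.nodalWeight, div_eq_inv_mul] using hcoeff.symm

end BorderedDiagonal

section Splitting

open Topology

lemma exists_add_eq_mul_eq_smul {ι : Type*} [Finite ι] {w c : ι → ℝ}
    (hw : ∀ k l, c k = 0 → c l = 0 → 0 < w k * w l) :
    ∃ t : ℝ, t ≠ 0 ∧ ∃ a b : ι → ℝ, a + b = c ∧ a * b = t • w := by
  obtain ⟨σ, hσ, hσw⟩ : ∃ σ : ℝ, σ ≠ 0 ∧ ∀ k, c k = 0 → σ * w k < 0 := by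
    by_cases h : ∃ k, c k = 0
    · obtain ⟨k, hk⟩ := h
      refine ⟨-w k, neg_ne_zero.mpr ?_, fun l hl => ?_⟩
      · exact left_ne_zero_of_mul (hw k k hk hk).ne'
      · rw [neg_mul]
        exact neg_neg_of_pos (hw k l hk hl)
    · exact ⟨1, one_ne_zero, fun k hk => absurd ⟨k, hk⟩ h⟩
  have hdiscrim : ∀ᶠ ε in 𝓝[>] (0 : ℝ), ∀ k, 0 ≤ discrim 1 (-c k) (ε * σ * w k) := by
    refine eventually_all.mpr fun k => ?_
    by_cases hk : c k = 0
    · filter_upwards [self_mem_nhdsWithin] with ε hε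
      rw [discrim, hk]
      nlinarith [mul_neg_of_pos_of_neg (Set.mem_Ioi.mp hε) (hσw k hk)]
    · have hcont : Continuous fun ε : ℝ => discrim 1 (-c k) (ε * σ * w k) := by
        unfold discrim
        fun_prop
      refine nhdsWithin_le_nhds (hcont.continuousAt.eventually_const_le ?_)
      simpa [discrim] using sq_pos_of_ne_zero hk
  obtain ⟨ε, hε, hεpos⟩ := (hdiscrim.and self_mem_nhdsWithin).exists
  have hroot (k : ι) : ∃ y : ℝ, 1 * (y * y) + -c k * y + ε * σ * w k = 0 :=
    exists_quadratic_eq_zero one_ne_zero ⟨_, (Real.mul_self_sqrt (hε k)).symm⟩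
  choose a ha using hroot
  refine ⟨ε * σ, mul_ne_zero hεpos.ne' hσ, a, c - a, add_sub_cancel a c, ?_⟩
  ext k
  simp only [Pi.mul_apply, Pi.sub_apply, Pi.smul_apply, smul_eq_mul]
  linear_combination -ha k

end Splitting

section CycleSpectra

open Lagrange

variable {m : ℕ}

lemma neg_one_pow_mul_nodalWeight_pos {n : ℕ} {ν : Fin n → ℝ} (hν : StrictMono ν) (k : Fin n) :
    0 < (-1) ^ (Finset.Ioi k).card * nodalWeight Finset.univ ν k := by
  have hIoi : Finset.Ioi k = {j ∈ Finset.univ.erase k | k < j} := by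
    ext j
    simpa using ne_of_gt
  rw [hIoi, ← Finset.prod_const, Finset.prod_filter, nodalWeight, ← Finset.prod_mul_distrib]
  refine Finset.prod_pos fun j hj => ?_
  split_ifs with hkj
  · simpa using hν hkj
  · simpa using hν (lt_of_le_of_ne (not_lt.mp hkj) (Finset.ne_of_mem_erase hj))

lemma nodalWeight_mul_nodalWeight_pos {n : ℕ} {ν : Fin n → ℝ} (hν : StrictMono ν) {k l : Fin n}
    (hkl : Even (k + l : ℕ)) : 0 < nodalWeight Finset.univ ν k * nodalWeight Finset.univ ν l := by
  have hpos := mul_pos (neg_one_pow_mul_nodalWeight_pos hν k) (neg_one_pow_mul_nodalWeight_pos hν l)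
  rw [mul_mul_mul_comm, ← pow_add, Even.neg_one_pow, one_mul] at hpos
  · exact hpos
  · rw [Fin.card_Ioi, Fin.card_Ioi]
    grind

lemma mul_sub_le_neg_nodalWeight_mul_eval_nodal {n : ℕ} {x : Fin (n + 1) → ℝ} {ν : Fin n → ℝ}
    (hν : StrictMono ν) (hx : ∀ k, x k.castSucc ≤ ν k ∧ ν k ≤ x k.succ) (k : Fin n) :
    (ν k - x k.castSucc) * (x k.succ - ν k) ≤
      -(nodalWeight Finset.univ ν k * (nodal Finset.univ x).eval (ν k)) := by
  have hratio : 1 ≤ ∏ j ∈ Finset.univ.erase k,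
      (ν k - ν j)⁻¹ * (ν k - x (k.castSucc.succAbove j)) := by
    refine Finset.one_le_prod fun j hj => ?_
    rw [inv_mul_eq_div]
    rcases lt_or_gt_of_ne (Finset.ne_of_mem_erase hj) with hjk | hkj
    · rw [Fin.succAbove_of_castSucc_lt _ _ hjk, one_le_div (sub_pos.mpr (hν hjk))]
      exact sub_le_sub_left (hx j).1 _
    · rw [Fin.succAbove_of_le_castSucc _ _ hkj.le, one_le_div_of_neg (sub_neg.mpr (hν hkj))]
      exact sub_le_sub_left (hx j).2 _
  have hgap : 0 ≤ (ν k - x k.castSucc) * (x k.succ - ν k) :=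
    mul_nonneg (sub_nonneg.mpr (hx k).1) (sub_nonneg.mpr (hx k).2)
  rw [eval_nodal, Fin.prod_univ_succAbove _ k.castSucc, ← Finset.mul_prod_erase _ _
    (Finset.mem_univ k), Fin.succAbove_of_le_castSucc _ _ le_rfl]
  rw [Finset.prod_mul_distrib] at hratio
  calc _ ≤ _ := le_mul_of_one_le_right hgap hratio
    _ = _ := by
      rw [nodalWeight]
      ring

theorem exists_inS_cycleGraph_charpoly_eq_borderedDiagonal {ν c : Fin (m + 2) → ℝ}
    (hν : Function.Injective ν) (hc : ∀ k l, c k = 0 → c l = 0 →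
      0 < nodalWeight Finset.univ ν k * nodalWeight Finset.univ ν l) (d : ℝ) :
    ∃ C, inS (SimpleGraph.cycleGraph (m + 3)) C ∧
      C.charpoly = (borderedDiagonal ν c d).charpoly := by
  obtain ⟨t, ht, a, b, hab, habw⟩ := exists_add_eq_mul_eq_smul hc
  have hne (k) : a k * b k ≠ 0 := by
    rw [← Pi.mul_apply, habw]
    exact mul_ne_zero ht (nodalWeight_ne_zero hν.injOn (Finset.mem_univ k))
  have ha (k) : a k ≠ 0 := left_ne_zero_of_mul (hne k)
  have hb : b ≠ 0 := fun h => hne 0 (by simp [h])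
  have horth (j) (hj : j < m + 1) : ∑ k, b k * (a k * ν k ^ j) = 0 := calc
    ∑ k, b k * (a k * ν k ^ j) = t * ∑ k, nodalWeight Finset.univ ν k * ν k ^ j := by
      rw [Finset.mul_sum]
      refine Finset.sum_congr rfl fun k _ => ?_
      have := congrFun habw k
      simp only [Pi.mul_apply, Pi.smul_apply, smul_eq_mul] at this
      linear_combination ν k ^ j * this
    _ = 0 := by rw [sum_nodalWeight_mul_pow_eq_zero hν (by simpa using hj), mul_zero]
  obtain ⟨W, hW, hU⟩ := exists_isUpperTriangular_orthogonal_mul (krylovMatrix ν a)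
  have hWc (i : Fin (m + 2)) : (W *ᵥ c) i ≠ 0 ↔ (i : ℕ) = 0 ∨ (i : ℕ) + 1 = m + 2 := by
    have hWa := mulVec_start_ne_zero_iff hν ha hW hU i
    have hWb := mulVec_orthogonal_krylov_ne_zero_iff hν ha hW hU hb horth i
    rw [← hab, mulVec_add, Pi.add_apply]
    grind
  have hT : inS (SimpleGraph.pathGraph (m + 2)) (W * diagonal ν * Wᵀ) :=
    inS_pathGraph_iff.mpr ⟨by simp [IsSymm, Matrix.mul_assoc],
      isUnreducedHessenberg_mul_diagonal_mul_transpose hν ha hW hU⟩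
  have hjoin := inS_partialJoin_fromBlocks (H := ⊥) (D := diagonal fun _ : Fin 1 => d)
    (X := {i : Fin (m + 2) | (i : ℕ) = 0 ∨ (i : ℕ) + 1 = m + 2}) hT
    (B := replicateCol (Fin 1) (W *ᵥ c)) (fun i _ => hWc i)
    ⟨isSymm_diagonal _, fun i j hij => (hij (Subsingleton.elim i j)).elim⟩
  rw [← cycleGraph_comap_finSumFinEquiv, replicateCol_mulVec] at hjoin
  have hcycle := inS_submatrix hjoin finSumFinEquiv.symm.injective
  rw [SimpleGraph.comap_comap, Equiv.self_comp_symm, SimpleGraph.comap_id] at hcycle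
  refine ⟨_, hcycle, ?_⟩
  rw [← reindex_apply, charpoly_reindex, borderedDiagonal,
    ← charpoly_fromBlocks_mul_mul_transpose hW (Q := (1 : Matrix (Fin 1) (Fin 1) ℝ)) (by simp)
      (diagonal ν) (replicateCol (Fin 1) c) (replicateCol (Fin 1) c)ᵀ (diagonal fun _ => d)]
  simp only [transpose_mul, transpose_one, Matrix.mul_one, Matrix.one_mul]

theorem exists_inS_cycleGraph_charpoly_eq_nodal {x : Fin (m + 3) → ℝ} (hx : Monotone x)
    (hties : ∀ k l : Fin (m + 2), x k.castSucc = x k.succ → x l.castSucc = x l.succ →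
      Even (k + l : ℕ)) :
    ∃ C, inS (SimpleGraph.cycleGraph (m + 3)) C ∧ C.charpoly = nodal Finset.univ x := by
  set ν : Fin (m + 2) → ℝ := fun k => (x k.castSucc + x k.succ) / 2
  have hν : StrictMono ν := by
    refine Fin.strictMono_iff_lt_succ.mpr fun k => ?_
    have h₁ : x k.castSucc.castSucc ≤ x k.castSucc.succ := hx (Fin.castSucc_le_succ _)
    have h₂ : x k.succ.castSucc ≤ x k.succ.succ := hx (Fin.castSucc_le_succ _)
    have hne : ¬(x k.castSucc.castSucc = x k.castSucc.succ ∧ x k.succ.castSucc = x k.succ.succ) :=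
      fun h => by
        have := hties _ _ h.1 h.2
        grind
    grind
  have hinterlace (k : Fin (m + 2)) : x k.castSucc ≤ ν k ∧ ν k ≤ x k.succ := by
    have := hx (Fin.castSucc_le_succ k)
    grind
  have hbound := mul_sub_le_neg_nodalWeight_mul_eval_nodal hν hinterlace
  set c : Fin (m + 2) → ℝ :=
    fun k => √(-(nodalWeight Finset.univ ν k * (nodal Finset.univ x).eval (ν k)))
  have hc (k l) (hk : c k = 0) (hl : c l = 0) :
      0 < nodalWeight Finset.univ ν k * nodalWeight Finset.univ ν l := by
    have htie {k} (hk : c k = 0) : x k.castSucc = x k.succ := by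
      have hgap := (hbound k).trans (Real.sqrt_eq_zero'.mp hk)
      simp only [ν] at hgap
      nlinarith [hx (Fin.castSucc_le_succ k)]
    exact nodalWeight_mul_nodalWeight_pos hν (hties k l (htie hk) (htie hl))
  obtain ⟨d, hd⟩ := exists_charpoly_borderedDiagonal_eq (c := c) hν.injective
    (nodal_monic (s := Finset.univ) (v := x)) (by simp) fun k => Real.sq_sqrt
      ((mul_nonneg (sub_nonneg.mpr (hinterlace k).1) (sub_nonneg.mpr (hinterlace k).2)).trans
        (hbound k))
  obtain ⟨C, hC, hCd⟩ := exists_inS_cycleGraph_charpoly_eq_borderedDiagonal hν.injective hc d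
  exact ⟨C, hC, hCd.trans hd⟩

end CycleSpectra

section Isospectral

open Topology

variable {W : Type*} [Fintype W] [DecidableEq W]

lemma contDiff_eval_charpoly {E : Type*} [NormedAddCommGroup E] [NormedSpace ℝ E] {n : ℕ∞}
    {B : E → Matrix W W ℝ} (hB : ∀ i j, ContDiff ℝ n fun p => B p i j) (z : ℝ) :
    ContDiff ℝ n fun p => (B p).charpoly.eval z := by
  simp only [eval_charpoly, det_apply']
  refine ContDiff.sum fun σ _ => contDiff_const.mul (contDiff_prod fun i _ => ?_)
  simp only [Matrix.sub_apply]
  exact contDiff_const.sub (hB _ _)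

lemma hasFDerivAt_eval_charpoly_diagonal_add (β : W → ℝ) (k : W) :
    HasFDerivAt (fun d => (diagonal (β + d)).charpoly.eval (β k))
      (-(∏ l ∈ Finset.univ.erase k, (β k - β l)) •
        (ContinuousLinearMap.proj k : (W → ℝ) →L[ℝ] ℝ)) 0 := by
  have hfactor : (fun d : W → ℝ => (diagonal (β + d)).charpoly.eval (β k)) =
      (fun d => -d k) * fun d => ∏ l ∈ Finset.univ.erase k, (β k - (β l + d l)) := by
    ext d
    rw [charpoly_diagonal, Polynomial.eval_prod, ← Finset.mul_prod_erase _ _ (Finset.mem_univ k)]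
    simp
  have hproj : HasFDerivAt (fun d : W → ℝ => -d k) (-ContinuousLinearMap.proj k) 0 :=
    (hasFDerivAt_apply (𝕜 := ℝ) k (0 : W → ℝ)).fun_neg
  have hprod : DifferentiableAt ℝ
      (fun d : W → ℝ => ∏ l ∈ Finset.univ.erase k, (β k - (β l + d l))) 0 := by
    fun_prop
  rw [hfactor]
  exact (hproj.mul hprod.hasFDerivAt).congr_fderiv (by ext; simp)

lemma isInvertible_pi_smul_proj {K ι : Type*} [Field K] [TopologicalSpace K] [ContinuousMul K]
    {ω : ι → K} (hω : ∀ k, ω k ≠ 0) :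
    (ContinuousLinearMap.pi fun k =>
      ω k • (ContinuousLinearMap.proj k : (ι → K) →L[K] K)).IsInvertible := by
  refine .of_inverse (g := .pi fun k => (ω k)⁻¹ • .proj k) ?_ ?_ <;>
  · ext x k
    simp [hω k]

lemma exists_tendsto_isRoot_charpoly {β : W → ℝ} (hβ : Function.Injective β)
    (A : Matrix W W ℝ) :
    ∃ d : ℝ → W → ℝ, Tendsto d (𝓝 0) (𝓝 0) ∧
      ∀ᶠ ε in 𝓝 0, ∀ k, (diagonal (β + d ε) + ε • A).charpoly.IsRoot (β k) := by
  set F : ℝ × (W → ℝ) → W → ℝ :=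
    fun p k => (diagonal (β + p.2) + p.1 • A).charpoly.eval (β k)
  have hF : ContDiff ℝ 1 F := by
    refine contDiff_pi.mpr fun k => contDiff_eval_charpoly (n := 1) (fun i j => ?_) (β k)
    simp only [Matrix.add_apply, diagonal_apply, Matrix.smul_apply]
    split_ifs <;> fun_prop
  have hstrict : HasStrictFDerivAt F (fderiv ℝ F 0) 0 := hF.hasStrictFDerivAt one_ne_zero
  have hpartial : fderiv ℝ F 0 ∘L .inr ℝ ℝ (W → ℝ) = .pi fun k =>
      -(∏ l ∈ Finset.univ.erase k, (β k - β l)) • ContinuousLinearMap.proj k := by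
    refine HasFDerivAt.unique (f := fun d => F (0, d)) (x := 0) ?_ ?_
    · exact hstrict.hasFDerivAt.comp (0 : W → ℝ) (ContinuousLinearMap.inr ℝ ℝ (W → ℝ)).hasFDerivAt
    · refine hasFDerivAt_pi.mpr fun k => ?_
      simpa [F] using hasFDerivAt_eval_charpoly_diagonal_add β k
  have hinv : (fderiv ℝ F 0 ∘L .inr ℝ ℝ (W → ℝ)).IsInvertible := by
    rw [hpartial]
    refine isInvertible_pi_smul_proj fun k => neg_ne_zero.mpr (Finset.prod_ne_zero_iff.mpr ?_)
    exact fun l hl => sub_ne_zero.mpr (hβ.ne (Finset.ne_of_mem_erase hl).symm)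
  have hF0 (k : W) : F 0 k = 0 := by
    simp [F, charpoly_diagonal, Polynomial.eval_prod, Finset.prod_eq_zero_iff, sub_eq_zero]
  refine ⟨hstrict.implicitFunctionOfProdDomain hinv,
    hstrict.tendsto_implicitFunctionOfProdDomain hinv, ?_⟩
  filter_upwards [hstrict.eventually_apply_implicitFunctionOfProdDomain hinv] with ε hε k
  exact (congrFun hε k).trans (hF0 k)

section Eigenbasis

variable {K : Type*} [Field K] {β : W → K} {B : Matrix W W K}

/-- The matrix whose `k`-th column is the `k`-th column of the adjugate of `scalar W (β k) - B`,
an eigenvector of `B` whenever `β k` is an eigenvalue. The columns are scaled so that the matrix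
is `1` for `B = diagonal β`. -/
def adjugateEigenbasis (β : W → K) (B : Matrix W W K) : Matrix W W K :=
  of fun i k => adjugate (scalar W (β k) - B) i k * Lagrange.nodalWeight Finset.univ β k

lemma mul_adjugateEigenbasis (hroot : ∀ k, B.charpoly.IsRoot (β k)) :
    B * adjugateEigenbasis β B = adjugateEigenbasis β B * diagonal β := by
  ext i k
  have hadj : (scalar W (β k) - B) * adjugate (scalar W (β k) - B) = 0 := by
    rw [mul_adjugate, ← eval_charpoly, hroot k, zero_smul]
  have hentry := congrFun (congrFun hadj i) k
  rw [Matrix.sub_mul, scalar_apply, Matrix.sub_apply, diagonal_mul, Matrix.zero_apply, sub_eq_zero,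
    Matrix.mul_apply] at hentry
  rw [mul_diagonal, Matrix.mul_apply]
  simp only [adjugateEigenbasis, of_apply, ← mul_assoc, ← Finset.sum_mul]
  rw [scalar_apply, ← hentry]
  ring

lemma adjugateEigenbasis_diagonal (hβ : Function.Injective β) :
    adjugateEigenbasis β (diagonal β) = 1 := by
  ext i k
  rw [adjugateEigenbasis, of_apply, scalar_apply, diagonal_sub, adjugate_diagonal]
  rcases eq_or_ne i k with rfl | hik
  · rw [diagonal_apply_eq, one_apply_eq, Lagrange.nodalWeight, ← Finset.prod_mul_distrib]
    exact Finset.prod_eq_one fun j hj =>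
      mul_inv_cancel₀ (sub_ne_zero.mpr (hβ.ne (Finset.ne_of_mem_erase hj).symm))
  · rw [diagonal_apply_ne _ hik, one_apply_ne hik, zero_mul]

lemma continuous_adjugateEigenbasis [TopologicalSpace K] [IsTopologicalRing K] (β : W → K) :
    Continuous (adjugateEigenbasis β) :=
  continuous_matrix fun i k =>
    ((continuous_const.sub continuous_id).matrix_adjugate.matrix_elem i k).mul continuous_const

lemma transpose_mul_eq_diagonal_of_mul_eq_mul_diagonal {Y : Matrix W W K} (hB : B.IsSymm)
    (hβ : Function.Injective β) (hBY : B * Y = Y * diagonal β) :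
    Yᵀ * Y = diagonal (Yᵀ * Y).diag := by
  have hcomm : diagonal β * (Yᵀ * Y) = Yᵀ * Y * diagonal β := calc
    diagonal β * (Yᵀ * Y) = (Y * diagonal β)ᵀ * Y := by
      rw [transpose_mul, diagonal_transpose, Matrix.mul_assoc]
    _ = Yᵀ * (B * Y) := by rw [← hBY, transpose_mul, hB.eq, Matrix.mul_assoc]
    _ = Yᵀ * Y * diagonal β := by rw [hBY, Matrix.mul_assoc]
  ext k l
  rcases eq_or_ne k l with rfl | hkl
  · rw [diagonal_apply_eq, diag_apply]
  · have hentry := congrFun (congrFun hcomm k) l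
    rw [diagonal_mul, mul_diagonal, mul_comm] at hentry
    rw [diagonal_apply_ne _ hkl]
    by_contra hne
    exact hkl (hβ (mul_left_cancel₀ hne hentry))

end Eigenbasis

/-- The matrix obtained from `Y` by scaling its columns to Euclidean norm one; zero columns stay
zero. -/
noncomputable def normalizeCols (Y : Matrix W W ℝ) : Matrix W W ℝ :=
  Y * diagonal fun k => (√((Yᵀ * Y) k k))⁻¹

lemma tendsto_normalizeCols_one {X : Type*} {l : Filter X} {Y : X → Matrix W W ℝ}
    (hY : Tendsto Y l (𝓝 1)) : Tendsto (fun x => normalizeCols (Y x)) l (𝓝 1) := by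
  have hcont : ContinuousAt normalizeCols (1 : Matrix W W ℝ) := by
    unfold normalizeCols
    refine continuousAt_id.mul (continuous_id.matrix_diagonal.continuousAt.comp
      (continuousAt_pi.mpr fun k => ContinuousAt.inv₀ ?_ (by simp)))
    fun_prop
  have hone : normalizeCols (1 : Matrix W W ℝ) = 1 := by simp [normalizeCols]
  rw [← hone]
  exact hcont.tendsto.comp hY

lemma normalizeCols_spec {β : W → ℝ} {B Y : Matrix W W ℝ} (hB : B.IsSymm)
    (hβ : Function.Injective β) (hBY : B * Y = Y * diagonal β) (hY : ∀ k, (Yᵀ * Y) k k ≠ 0) :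
    (normalizeCols Y)ᵀ * normalizeCols Y = 1 ∧
      normalizeCols Y * diagonal β * (normalizeCols Y)ᵀ = B := by
  have horth : (normalizeCols Y)ᵀ * normalizeCols Y = 1 := by
    have hpos (k : W) : 0 < (Yᵀ * Y) k k :=
      (Finset.sum_nonneg fun i _ => mul_self_nonneg (Y i k)).lt_of_ne' (hY k)
    rw [normalizeCols, transpose_mul, diagonal_transpose, Matrix.mul_assoc, ← Matrix.mul_assoc Yᵀ,
      transpose_mul_eq_diagonal_of_mul_eq_mul_diagonal hB hβ hBY, diagonal_mul_diagonal,
      diagonal_mul_diagonal, ← diagonal_one]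
    congr 1
    ext k
    simp only [diag_apply, diagonal_apply_eq]
    have hsqrt := Real.sqrt_pos.mpr (hpos k)
    field_simp
    exact (Real.sq_sqrt (hpos k).le).symm
  refine ⟨horth, ?_⟩
  have heig : B * normalizeCols Y = normalizeCols Y * diagonal β := by
    rw [normalizeCols, ← Matrix.mul_assoc, hBY, Matrix.mul_assoc, Matrix.mul_assoc,
      diagonal_mul_diagonal, diagonal_mul_diagonal]
    simp only [mul_comm]
  rw [← heig, Matrix.mul_assoc, mul_eq_one_comm.mp horth, Matrix.mul_one]

theorem exists_tendsto_isospectral {β : W → ℝ} (hβ : Function.Injective β) {A : Matrix W W ℝ}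
    (hA : A.IsSymm) :
    ∃ (Q : ℝ → Matrix W W ℝ) (e : ℝ → W → ℝ), Tendsto Q (𝓝 0) (𝓝 1) ∧ ∀ᶠ ε in 𝓝 0,
      (Q ε)ᵀ * Q ε = 1 ∧ Q ε * diagonal β * (Q ε)ᵀ = diagonal (e ε) + ε • A := by
  obtain ⟨d, hd, hroot⟩ := exists_tendsto_isRoot_charpoly hβ A
  set B : ℝ → Matrix W W ℝ := fun ε => diagonal (β + d ε) + ε • A
  set Y : ℝ → Matrix W W ℝ := fun ε => adjugateEigenbasis β (B ε)
  have hB : Tendsto B (𝓝 0) (𝓝 (diagonal β)) := by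
    have hdiag : Tendsto (fun ε => diagonal (β + d ε)) (𝓝 0) (𝓝 (diagonal (β + 0))) :=
      (continuous_id.matrix_diagonal.tendsto _).comp (hd.const_add β)
    simpa using hdiag.add (tendsto_id.smul_const A)
  have hY : Tendsto Y (𝓝 0) (𝓝 1) := by
    rw [← adjugateEigenbasis_diagonal hβ]
    exact ((continuous_adjugateEigenbasis β).tendsto _).comp hB
  have hnorm : ∀ᶠ ε in 𝓝 0, ∀ k, ((Y ε)ᵀ * Y ε) k k ≠ 0 := by
    refine eventually_all.mpr fun k => ?_
    have hcont : Continuous fun M : Matrix W W ℝ => (Mᵀ * M) k k := by fun_prop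
    exact ((hcont.tendsto 1).comp hY).eventually_ne (by simp)
  refine ⟨fun ε => normalizeCols (Y ε), fun ε => β + d ε, tendsto_normalizeCols_one hY, ?_⟩
  filter_upwards [hroot, hnorm] with ε hε hnormε
  exact normalizeCols_spec ((isSymm_diagonal _).add (hA.smul ε)) hβ
    (mul_adjugateEigenbasis hε) hnormε

theorem exists_orthogonal_inS_mulVec_ne_zero (H : SimpleGraph W) {β : W → ℝ}
    (hβ : Function.Injective β) {κ : Type*} [Finite κ] {y : κ → W → ℝ} (hy : ∀ i k, y i k ≠ 0) :
    ∃ Q : Matrix W W ℝ, Qᵀ * Q = 1 ∧ inS H (Q * diagonal β * Qᵀ) ∧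
      ∀ i k, (Q *ᵥ y i) k ≠ 0 := by
  classical
  obtain ⟨Q, e, hQ, hspec⟩ := exists_tendsto_isospectral hβ (H.isSymm_adjMatrix (α := ℝ))
  have hne : ∀ᶠ ε in 𝓝 0, ∀ i k, (Q ε *ᵥ y i) k ≠ 0 := by
    refine eventually_all.mpr fun i => eventually_all.mpr fun k => ?_
    have hcont : Continuous fun M : Matrix W W ℝ => (M *ᵥ y i) k := by fun_prop
    exact ((hcont.tendsto 1).comp hQ).eventually_ne (by simpa using hy i k)
  obtain ⟨ε, ⟨⟨horth, heq⟩, hneε⟩, hε⟩ := ((hspec.and hne).filter_mono nhdsWithin_le_nhds).and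
    (self_mem_nhdsWithin : {(0 : ℝ)}ᶜ ∈ 𝓝[≠] 0) |>.exists
  refine ⟨Q ε, horth, heq ▸ ⟨(isSymm_diagonal _).add (H.isSymm_adjMatrix.smul ε), ?_⟩, hneε⟩
  intro i j hij
  have : ε ≠ 0 := hε
  simp [hij, this]

end Isospectral

section Gluing

open SimpleGraph

variable {W : Type*} [Fintype W] [DecidableEq W]

theorem exists_inS_partialJoin_charpoly_eq {α : Type*} [Fintype α] [DecidableEq α]
    {G : SimpleGraph α} {X : Set α} (H : SimpleGraph W) {A : Matrix α α ℝ} (hA : inS G A)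
    {B : Matrix α W ℝ} (hB : ∀ i k, B i k ≠ 0 ↔ i ∈ X) {d : W → ℝ} (hd : Function.Injective d) :
    ∃ A', inS (partialJoin G X H) A' ∧
      A'.charpoly = (fromBlocks A B Bᵀ (diagonal d)).charpoly := by
  obtain ⟨Q, hQ, hQH, hQB⟩ := exists_orthogonal_inS_mulVec_ne_zero H hd
    (y := fun i : X => B i) fun i k => (hB i k).mpr i.2
  have hBQ (i : α) (k : W) : (B * Qᵀ) i k ≠ 0 ↔ i ∈ X := by
    have hentry : (B * Qᵀ) i k = (Q *ᵥ B i) k := by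
      simp [Matrix.mul_apply, mulVec, dotProduct, mul_comm]
    rw [hentry]
    by_cases hi : i ∈ X
    · exact iff_of_true (hQB ⟨i, hi⟩ k) hi
    · have hrow : B i = 0 := funext fun k => not_not.mp (mt (hB i k).mp hi)
      simp [hrow, hi]
  refine ⟨_, inS_partialJoin_fromBlocks hA hBQ hQH, ?_⟩
  rw [← charpoly_fromBlocks_mul_mul_transpose (P := (1 : Matrix α α ℝ)) (by simp) hQ A B Bᵀ]
  simp

lemma charpoly_fromBlocks_mul_diagonal_mul_transpose {R α β : Type*} [CommRing R] [Fintype α]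
    [DecidableEq α] [Fintype β] [DecidableEq β] {V : Matrix β β R} (hV : Vᵀ * V = 1)
    (A : Matrix α α R) (B : Matrix α β R) (d : β → R) :
    (fromBlocks A B Bᵀ (V * diagonal d * Vᵀ)).charpoly =
      (fromBlocks A (B * V) (B * V)ᵀ (diagonal d)).charpoly := by
  have hV' : V * Vᵀ = 1 := mul_eq_one_comm.mp hV
  rw [← charpoly_fromBlocks_mul_mul_transpose (P := (1 : Matrix α α R)) (by simp) hV A (B * V)]
  simp only [transpose_mul, transpose_one, Matrix.one_mul, Matrix.mul_one, Matrix.mul_assoc B, hV']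
  rw [← Matrix.mul_assoc V, hV', Matrix.one_mul]

lemma mul_apply_ne_zero_iff_of_inS_cycleGraph {n h : ℕ} (hn : 2 ≤ n)
    {C : Matrix (Fin (n + (h + 1))) (Fin (n + (h + 1))) ℝ} (hC : inS (cycleGraph (n + (h + 1))) C)
    {V : Matrix (Fin (h + 1)) (Fin (h + 1)) ℝ} {k : Fin (h + 1)} (hV₀ : V 0 k ≠ 0)
    (hV₁ : V (Fin.last h) k ≠ 0) (i : Fin n) :
    (C.submatrix (Fin.castAdd (h + 1)) (Fin.natAdd n) * V) i k ≠ 0 ↔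
      i.val = 0 ∨ i.val = n - 1 := by
  set R := C.submatrix (Fin.castAdd (h + 1)) (Fin.natAdd n)
  have hR (j : Fin (h + 1)) : R i j ≠ 0 ↔
      (i.val = 0 ∧ j = Fin.last h) ∨ (i.val = n - 1 ∧ j = 0) := by
    have hij : Fin.castAdd (h + 1) i ≠ Fin.natAdd n j := by
      rw [ne_eq, Fin.ext_iff, Fin.val_castAdd, Fin.val_natAdd]
      omega
    refine (hC.2 _ _ hij).trans (cycleGraph_adj_castAdd_natAdd.trans ?_)
    grind
  rw [Matrix.mul_apply]
  by_cases hi : i.val = 0 ∨ i.val = n - 1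
  · obtain ⟨j, hj, hVj⟩ : ∃ j, (∀ j', R i j' ≠ 0 ↔ j' = j) ∧ V j k ≠ 0 := by
      rcases hi with hi | hi
      · exact ⟨Fin.last h, fun j' => by grind, hV₁⟩
      · exact ⟨0, fun j' => by grind, hV₀⟩
    rw [Fintype.sum_eq_single j fun j' hj' => by rw [not_not.mp (mt (hj j').mp hj'), zero_mul]]
    exact iff_of_true (mul_ne_zero ((hj j).mpr rfl) hVj) hi
  · have hrow (j : Fin (h + 1)) : R i j = 0 := not_not.mp (mt (hR j).mp (by grind))
    simp only [hrow, zero_mul, Finset.sum_const_zero, ne_eq, not_true_eq_false, hi]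

lemma exists_inS_pathGraph_charpoly_eq_of_inS_cycleGraph {n h : ℕ} (hn : 2 ≤ n)
    {C : Matrix (Fin (n + (h + 1))) (Fin (n + (h + 1))) ℝ}
    (hC : inS (cycleGraph (n + (h + 1))) C) :
    ∃ (A : Matrix (Fin n) (Fin n) ℝ) (B : Matrix (Fin n) (Fin (h + 1)) ℝ) (d : Fin (h + 1) → ℝ),
      inS (pathGraph n) A ∧ (∀ i k, B i k ≠ 0 ↔ i ∈ {i : Fin n | i.val = 0 ∨ i.val = n - 1}) ∧
      Function.Injective d ∧ (fromBlocks A B Bᵀ (diagonal d)).charpoly = C.charpoly := by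
  set A := C.submatrix (Fin.castAdd (h + 1)) (Fin.castAdd (h + 1))
  set R := C.submatrix (Fin.castAdd (h + 1)) (Fin.natAdd n)
  set D := C.submatrix (Fin.natAdd n) (Fin.natAdd n)
  have hA : inS (pathGraph n) A := by
    rw [← cycleGraph_comap_castAdd (h := h + 1) h.succ_pos]
    exact inS_submatrix hC (Fin.castAdd_injective n (h + 1))
  have hD : inS (pathGraph (h + 1)) D := by
    rw [← cycleGraph_comap_natAdd (n := n) (by omega)]
    exact inS_submatrix hC (Fin.natAdd_injective (h + 1) n)
  have hblocks : fromBlocks A R Rᵀ D = reindex finSumFinEquiv.symm finSumFinEquiv.symm C := by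
    ext (i | i) (j | j)
    · simp [A]
    · simp [R]
    · simp [R, hC.1.apply]
    · simp [D]
  obtain ⟨V, d, hV, hDV, hd, hV₀⟩ := exists_eigenbasis_of_inS_pathGraph hD
  refine ⟨A, R * V, d, hA, fun i k => ?_, hd, ?_⟩
  · exact mul_apply_ne_zero_iff_of_inS_cycleGraph hn hC (hV₀ k).1 (hV₀ k).2 i
  · rw [← charpoly_fromBlocks_mul_diagonal_mul_transpose hV, ← hDV, hblocks, charpoly_reindex]

theorem exists_inS_partialJoin_pathGraph_charpoly_eq [Nonempty W] {n : ℕ} (hn : 2 ≤ n)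
    (H : SimpleGraph W) {C : Matrix (Fin (n + Fintype.card W)) (Fin (n + Fintype.card W)) ℝ}
    (hC : inS (cycleGraph (n + Fintype.card W)) C) :
    ∃ A, inS (partialJoin (pathGraph n) {i : Fin n | i.val = 0 ∨ i.val = n - 1} H) A ∧
      A.charpoly = C.charpoly := by
  obtain ⟨h, hh⟩ := Nat.exists_eq_succ_of_ne_zero (Fintype.card_ne_zero (α := W))
  obtain ⟨σ⟩ : Nonempty (W ≃ Fin (h + 1)) := ⟨Fintype.equivFinOfCardEq hh⟩
  generalize Fintype.card W = c at hh C hC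
  subst hh
  obtain ⟨A, B, d, hA, hB, hd, hchar⟩ := exists_inS_pathGraph_charpoly_eq_of_inS_cycleGraph hn hC
  obtain ⟨A', hA', hchar'⟩ := exists_inS_partialJoin_charpoly_eq H hA
    (B := B.submatrix id σ) (fun i k => hB i (σ k)) (hd.comp σ.injective)
  refine ⟨A', hA', hchar'.trans (Eq.trans ?_ hchar)⟩
  rw [← charpoly_reindex (Equiv.sumCongr (Equiv.refl (Fin n)) σ)]
  congr 1
  ext (i | i) (j | j) <;> simp [diagonal_apply]

end Gluing

section MultiplicityLists

lemma specMultiset_eq_of_charpoly_eq_nodal {V ι : Type*} [Fintype V] [DecidableEq V] [Fintype ι]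
    {A : Matrix V V ℝ} {x : ι → ℝ} (hA : A.charpoly = Lagrange.nodal Finset.univ x) :
    specMultiset A = Finset.univ.val.map x := by
  have hroots := Polynomial.roots_multiset_prod_X_sub_C (Finset.univ.val.map x)
  rwa [Multiset.map_map, Function.comp_def, ← Finset.prod_eq_multiset_prod, ← Lagrange.nodal,
    ← hA] at hroots

/-- The increasing sequence `0, 0, 1, 1, …, s - 1, s - 1, s, s + 1, …`, in which exactly the
numbers below `s` occur twice. -/
def doubledSequence (s i : ℕ) : ℕ := max (i / 2) (i - s)

lemma doubledSequence_monotone (s : ℕ) : Monotone (doubledSequence s) := by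
  intro i j hij
  unfold doubledSequence
  omega

lemma even_of_doubledSequence_eq_succ {s i : ℕ}
    (h : doubledSequence s i = doubledSequence s (i + 1)) : Even i := by
  unfold doubledSequence at h
  rw [Nat.even_iff]
  omega

lemma map_div_two_range (s : ℕ) :
    (Multiset.range (2 * s)).map (· / 2) = 2 • Multiset.range s := by
  induction s with
  | zero => rfl
  | succ s ih =>
    have hodd : (2 * s + 1) / 2 = s := by omega
    have heven : 2 * s / 2 = s := by omega
    rw [mul_add_one, Multiset.range_succ, Multiset.range_succ, Multiset.range_succ,
      Multiset.map_cons, Multiset.map_cons, ih, hodd, heven, two_nsmul, two_nsmul,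
      Multiset.cons_add, Multiset.add_cons]

lemma map_doubledSequence_range {s N : ℕ} (hs : 2 * s ≤ N) :
    (Multiset.range N).map (doubledSequence s) =
      2 • Multiset.range s + (Multiset.range (N - 2 * s)).map (s + ·) := by
  obtain ⟨r, rfl⟩ := Nat.exists_eq_add_of_le hs
  rw [Multiset.range_add, Multiset.map_add, Multiset.map_map, Nat.add_sub_cancel_left,
    ← map_div_two_range]
  congr 1 <;> refine Multiset.map_congr rfl fun i hi => ?_
  · rw [Multiset.mem_range] at hi
    unfold doubledSequence
    omega
  · rw [Function.comp_apply, doubledSequence]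
    omega

lemma map_univ_val_fin {γ : Type*} (f : ℕ → γ) (N : ℕ) :
    (Finset.univ : Finset (Fin N)).val.map (fun i : Fin N => f i) = (Multiset.range N).map f := by
  have hval : Finset.univ.val.map Fin.val = Multiset.range N :=
    congrArg Finset.val (Fin.map_valEmbedding_univ.trans (Nat.Iio_eq_range N))
  rw [← hval, Multiset.map_map, Function.comp_def]

theorem exists_inS_cycleGraph_specMultiset_eq {s m : ℕ} (hs : 2 * s ≤ m + 3) :
    ∃ C : Matrix (Fin (m + 3)) (Fin (m + 3)) ℝ, inS (SimpleGraph.cycleGraph (m + 3)) C ∧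
      specMultiset C = 2 • (Multiset.range s).map Nat.cast +
        (Multiset.range (m + 3 - 2 * s)).map fun j => ((s + j : ℕ) : ℝ) := by
  obtain ⟨C, hC, hchar⟩ := exists_inS_cycleGraph_charpoly_eq_nodal
    (x := fun i : Fin (m + 3) => (doubledSequence s i : ℝ))
    (fun i j hij => Nat.cast_le.mpr (doubledSequence_monotone s hij))
    fun k l hk hl => (even_of_doubledSequence_eq_succ (Nat.cast_injective hk)).add
      (even_of_doubledSequence_eq_succ (Nat.cast_injective hl))
  refine ⟨C, hC, ?_⟩
  rw [specMultiset_eq_of_charpoly_eq_nodal hchar,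
    map_univ_val_fin (fun i => (doubledSequence s i : ℝ)),
    ← Function.comp_def Nat.cast, ← Multiset.map_map, map_doubledSequence_range hs,
    Multiset.map_add, Multiset.map_nsmul, Multiset.map_map, Function.comp_def]

end MultiplicityLists

theorem statement16_general {n : ℕ} (hn : 2 ≤ n) {W : Type*} [Fintype W] [DecidableEq W]
    [Nonempty W] (H : SimpleGraph W) {s : ℕ} (hs : 2 * s ≤ n + Fintype.card W) :
    ∃ A : Matrix (Fin n ⊕ W) (Fin n ⊕ W) ℝ,
      inS (partialJoin (SimpleGraph.pathGraph n)
        {i : Fin n | i.val = 0 ∨ i.val = n - 1} H) A ∧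
      ∃ (lam : Fin s → ℝ) (mu : Fin (n + Fintype.card W - 2 * s) → ℝ),
        Function.Injective lam ∧ Function.Injective mu ∧
        (∀ i j, lam i ≠ mu j) ∧
        specMultiset A = 2 • (Finset.univ.val.map lam) + Finset.univ.val.map mu := by
  obtain ⟨C, hC, hspec⟩ : ∃ C, inS (SimpleGraph.cycleGraph (n + Fintype.card W)) C ∧
      specMultiset C = 2 • (Multiset.range s).map Nat.cast +
        (Multiset.range (n + Fintype.card W - 2 * s)).map fun j => ((s + j : ℕ) : ℝ) := by
    obtain ⟨m, hm⟩ : ∃ m, n + Fintype.card W = m + 3 :=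
      Nat.exists_eq_add_of_le' (Nat.add_le_add hn Fintype.card_pos)
    rw [hm] at hs ⊢
    exact exists_inS_cycleGraph_specMultiset_eq hs
  obtain ⟨A, hA, hchar⟩ := exists_inS_partialJoin_pathGraph_charpoly_eq hn H hC
  refine ⟨A, hA, fun i => (i : ℕ), fun j => (s + j : ℕ), ?_, ?_, ?_, ?_⟩
  · exact Nat.cast_injective.comp Fin.val_injective
  · exact fun i j hij => Fin.ext (Nat.add_left_cancel (Nat.cast_injective hij))
  · exact fun i j => Nat.cast_injective.ne (by omega)
  · rw [map_univ_val_fin (fun i => (i : ℝ)), map_univ_val_fin (fun j => ((s + j : ℕ) : ℝ)),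
      ← hspec, specMultiset, hchar, specMultiset]

/-- Example 3.11: let `X` be the two endpoints of `P_n` (`n ≥ 2`), `H`
connected, and `J = (P_n, X) ∨ H`. For every `s` with `2s ≤ n + |H|`, some `A ∈ S(J)`
realises the unordered multiplicity list `{2^(s), 1^(n+|H|−2s)}`. -/
theorem statement16 (n h : ℕ) (hn : 2 ≤ n) (H : SimpleGraph (Fin h)) (hH : H.Connected)
    (s : ℕ) (hs : 2 * s ≤ n + h) :
    ∃ A : Matrix (Fin n ⊕ Fin h) (Fin n ⊕ Fin h) ℝ,
      inS (partialJoin (SimpleGraph.pathGraph n)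
        {i : Fin n | i.val = 0 ∨ i.val = n - 1} H) A ∧
      ∃ (lam : Fin s → ℝ) (mu : Fin (n + h - 2 * s) → ℝ),
        Function.Injective lam ∧ Function.Injective mu ∧
        (∀ i j, lam i ≠ mu j) ∧
        specMultiset A = 2 • (Finset.univ.val.map lam) + Finset.univ.val.map mu := by
  have := hH.nonempty
  have key := statement16_general hn H ((Fintype.card_fin h).symm ▸ hs)
  rwa [Fintype.card_fin] at key
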